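/- Let q = 2^m ≥ 8 and suppose k is an integer with 3q − 4 ≤ 4k and k ≤ q − 4; set r = q − k. If u ∈ 𝔽_q^q is a deep hole of TRS_k(𝔽_q, θ) with syndrome w = (w_0, …, w_{r-1})^T = H·u^T, then either (a) w_0 = w_1 = ⋯ = w_{r-2} = 0 and w_{r-1} ≠ 0, or (b) w_0 = ⋯ = w_{r-4} = 0, w_{r-3} ≠ 0, and w_{r-2} = θ^{-1} w_{r-3}. -/

import Mathlib

/-!
Let `L(P) = ∑ u_j P(α_j)`, so that the syndrome records the values of `L` on
`1, X, …, X ^ (r-2), X ^ (r-1) - θ X ^ r`. The covering radius is at least `r` (`le_covRad`), so a deep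
hole is at distance at least `r` from the code. On the other hand `u` is at distance at most `r - 1`
as soon as `L` kills a polynomial `(X - z) ∏_{a ∈ T} (X - a)` with `|T| = r - 1` and
`z + ∑_{a ∈ T} a = θ⁻¹` (`exists_codeword`); the root `z` may lie in `T`. It remains to find such a
polynomial whenever the syndrome has neither of the two forms.

The polynomial is sought as `(X - z)² (X - x) (X - y) ∏_{a ∈ A} (X - a)` with `|A| = r - 4`. In
characteristic two the double root does not contribute to the sum, so the condition becomes
`x + y = σ` with `σ = θ⁻¹ + ∑_{a ∈ A} a`, and `z` is free. Since `(X - z)² = X² + z²`, the equation is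
linear in `z²`, and every element of the field is a square; one only has to choose `A` and `x` such
that its solution `z` exists and is not one of the other roots. A greedy choice gives an `A` for which
each of these conditions is a nonzero polynomial condition on `x` (`exists_base`), and the degrees add
up to at most `4 (r - 4) + 10 < q` (`exists_tail`), which is where `3 q - 4 ≤ 4 k` enters. The greedy
choice is possible unless `w_0 = ⋯ = w_{r-4} = 0` and `w_{r-2} = θ⁻¹ w_{r-3}`; the latter is form (b)
when `w_{r-3} ≠ 0`, and otherwise form (a) or the zero syndrome, for which `L` kills every such
polynomial.
-/

open Polynomial Finset

/-- The set `S_{k,θ}` of twisted polynomials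
`Σ_{i=0}^{k-2} f_i x^i + f_{k-1}(x^{k-1} + θ x^k)`. -/
def Sset (F : Type*) [Field F] (k : ℕ) (θ : F) : Set (Polynomial F) :=
  {p | ∃ f : ℕ → F, p = (∑ i ∈ Finset.range (k - 1), Polynomial.C (f i) * Polynomial.X ^ i)
        + Polynomial.C (f (k - 1)) * (Polynomial.X ^ (k - 1) + Polynomial.C θ * Polynomial.X ^ k)}

/-- The twisted Reed–Solomon code `TRS_k(A, θ)` for the evaluation sequence `α`. -/
def TRS {F : Type*} [Field F] {n : ℕ} (α : Fin n → F) (k : ℕ) (θ : F) : Set (Fin n → F) :=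
  {v | ∃ p ∈ Sset F k θ, v = fun j => p.eval (α j)}

/-- The (Hamming) error distance `d(u, C)` from a word `u` to a code `C`. -/
noncomputable def distTo {F : Type*} [DecidableEq F] {n : ℕ} (u : Fin n → F)
    (C : Set (Fin n → F)) : ℕ :=
  sInf {d | ∃ c ∈ C, hammingDist u c = d}

/-- The covering radius `ρ(C) = max_u d(u, C)` of a code `C`. -/
noncomputable def covRad {F : Type*} [DecidableEq F] {n : ℕ} (C : Set (Fin n → F)) : ℕ :=
  sSup {d | ∃ u, distTo u C = d}

/-- `u` is a deep hole of `C` if `d(u, C) = ρ(C)`. -/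
def IsDeepHole {F : Type*} [DecidableEq F] {n : ℕ} (C : Set (Fin n → F)) (u : Fin n → F) :
    Prop :=
  distTo u C = covRad C

/-- The column vector `c_{r,θ}(a) = (1, a, …, a^{r-2}, a^{r-1} - θ a^r)ᵀ ∈ 𝔽_q^r`. -/
def crv (F : Type*) [Field F] (r : ℕ) (θ a : F) : Fin r → F :=
  fun i => if (i : ℕ) = r - 1 then a ^ (r - 1) - θ * a ^ r else a ^ (i : ℕ)

/-- The parity-check matrix `H` whose `j`-th column is `c_{r,θ}(α_j)`. -/
def Hmat {F : Type*} [Field F] {n : ℕ} (r : ℕ) (θ : F) (α : Fin n → F) :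
    Matrix (Fin r) (Fin n) F :=
  Matrix.of fun i j => crv F r θ (α j) i


/-! ### Power sums and a criterion for small distance -/


/-- The power sums `∑ a ^ i` over the whole field, up to and including the exponent `i = q`. -/
lemma sum_pow_eq {F : Type*} [Field F] [Fintype F] (h8 : 8 ≤ Fintype.card F) (i : ℕ)
    (hi : i ≤ Fintype.card F) :
    ∑ a : F, a ^ i = if i = Fintype.card F - 1 then -1 else 0 := by
  classical
  split_ifs with h
  · have h1 : ∀ a : F, a ^ i = if a = 0 then 0 else 1 := by
      intro a
      split_ifs with ha
      · rw [ha, zero_pow (by omega)]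
      · rw [h, FiniteField.pow_card_sub_one_eq_one a ha]
    simp_rw [h1]
    have h2 : ∀ a : F, (if a = 0 then (0 : F) else 1) = 1 - if a = 0 then 1 else 0 := by
      intro a; split_ifs <;> simp
    simp_rw [h2]
    rw [Finset.sum_sub_distrib]
    simp
  · rcases Nat.lt_or_ge i (Fintype.card F - 1) with h1 | h1
    · exact FiniteField.sum_pow_lt_card_sub_one _ i h1
    · have h2 : i = Fintype.card F := by omega
      simp_rw [h2, FiniteField.pow_card]
      simpa using FiniteField.sum_pow_lt_card_sub_one F 1 (by omega)

lemma sum_eval_eq {F : Type*} [Field F] [Fintype F] (h8 : 8 ≤ Fintype.card F) (R : F[X])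
    (hR : R.natDegree ≤ Fintype.card F) :
    ∑ a : F, R.eval a = - R.coeff (Fintype.card F - 1) := by
  simp_rw [Polynomial.eval_eq_sum_range' (Nat.lt_succ_of_le hR)]
  rw [Finset.sum_comm]
  simp_rw [← Finset.mul_sum]
  rw [Finset.sum_congr rfl (fun i hi => by
    rw [sum_pow_eq h8 i (by simpa [Nat.lt_succ_iff] using hi)])]
  simp only [mul_ite, mul_neg, mul_one, mul_zero]
  rw [Finset.sum_ite_eq' ]
  simp

/-- The three facts about the locator polynomial `(X - z) ∏_{a ∈ T} (X - a)` that are used: its degree,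
its leading coefficient and, by Vieta, its second coefficient. -/
lemma locator_coeffs {F : Type*} [Field F] (T : Finset F) (z : F) :
    ((X - C z) * ∏ a ∈ T, (X - C a)).natDegree = T.card + 1 ∧
    ((X - C z) * ∏ a ∈ T, (X - C a)).coeff (T.card + 1) = 1 ∧
    ((X - C z) * ∏ a ∈ T, (X - C a)).coeff T.card = -(z + ∑ a ∈ T, a) := by
  have hgm : (∏ a ∈ T, (X - C a)).Monic := Polynomial.monic_prod_X_sub_C _ _
  have hPm := (monic_X_sub_C z).mul hgm
  have hPd : ((X - C z) * ∏ a ∈ T, (X - C a)).natDegree = T.card + 1 := by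
    rw [(monic_X_sub_C z).natDegree_mul hgm, natDegree_X_sub_C,
      Polynomial.natDegree_finsetProd_X_sub_C_eq_card, add_comm]
  refine ⟨hPd, by rw [← hPd]; exact hPm, ?_⟩
  have h := (monic_X_sub_C z).nextCoeff_mul hgm
  rw [Polynomial.nextCoeff_of_natDegree_pos (by omega), hPd, Nat.add_sub_cancel,
    Polynomial.prod_X_sub_C_nextCoeff, nextCoeff_X_sub_C] at h
  rw [h]
  ring

/-- Sufficient condition for `u` to be within distance `q - k - 1` of the code. Let `f` interpolate `u`
off `T`, so `deg f ≤ k`, and let `P = (X - z) ∏_{a ∈ T} (X - a)`. The values of `f * P` sum to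
`∑ u_j P(α_j) = 0`, and this sum is minus the coefficient of `X ^ (q - 1)` in `f * P`, which is
`f_{k-1} - θ⁻¹ f_k` because `P = X ^ (q - k) - θ⁻¹ X ^ (q - k - 1) + ⋯`. Hence `f` is a twisted
polynomial. -/
lemma exists_codeword {F : Type*} [Field F] [Fintype F] [DecidableEq F]
    (q : ℕ) (hq : q = Fintype.card F) (hq8 : 8 ≤ q)
    (k : ℕ) (hk : 1 ≤ k) (hk4 : k + 4 ≤ q)
    (θ : F) (hθ : θ ≠ 0) (α : Fin q → F) (hα : Function.Bijective α) (u : Fin q → F)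
    (T : Finset F) (hT : T.card = q - k - 1) (z : F) (hz : z + ∑ a ∈ T, a = θ⁻¹)
    (hL : ∑ j, u j * ((X - C z) * ∏ a ∈ T, (X - C a)).eval (α j) = 0) :
    ∃ c ∈ TRS α k θ, hammingDist u c ≤ q - k - 1 := by
  set g : F[X] := ∏ a ∈ T, (X - C a) with hg
  set P : F[X] := (X - C z) * g with hP
  let e := Equiv.ofBijective α hα
  let U : F → F := fun a => u (e.symm a)
  have hU : ∀ j, U (α j) = u j := fun j => congrArg u (e.symm_apply_apply j)
  set f : F[X] := Lagrange.interpolate Tᶜ id U with hf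
  have hcard : Tᶜ.card = k + 1 := by
    rw [Finset.card_compl, hT, ← hq]; omega
  have hfdeg : f.natDegree < k + 1 := by
    rw [← hcard]
    have : f.degree < (Tᶜ.card : WithBot ℕ) := Lagrange.degree_interpolate_lt U (Set.injOn_id _)
    rcases eq_or_ne f 0 with h | h
    · rw [h, hcard]; simp
    · exact (natDegree_lt_iff_degree_lt h).mpr this
  have hfev : ∀ a, a ∉ T → f.eval a = U a := fun a ha =>
    Lagrange.eval_interpolate_at_node (v := id) U (Set.injOn_id _) (Finset.mem_compl.mpr ha)
  obtain ⟨hPd, hPl, hPn⟩ := locator_coeffs T z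
  rw [hz, hT] at hPn
  rw [hT, show q - k - 1 + 1 = q - k by omega] at hPd hPl
  change P.natDegree = _ at hPd
  change P.coeff _ = _ at hPl hPn
  have h0 : ∑ a : F, (f * P).eval a = 0 := by
    rw [← hL, ← Equiv.sum_comp e]
    refine Finset.sum_congr rfl fun j _ => ?_
    change (f * P).eval (α j) = _
    rw [eval_mul]
    by_cases h : α j ∈ T
    · have : P.eval (α j) = 0 := by
        rw [hP, eval_mul, hg, eval_prod, Finset.prod_eq_zero h (by simp), mul_zero]
      rw [this]; simp
    · rw [hfev _ h, hU]
  have hRd : (f * P).natDegree ≤ Fintype.card F := by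
    refine natDegree_mul_le.trans ?_
    rw [hPd]; omega
  rw [sum_eval_eq (by omega) _ hRd, neg_eq_zero, coeff_mul] at h0
  have h1 : f.coeff (k - 1) - f.coeff k * θ⁻¹ = 0 := by
    rw [← h0, ← Finset.sum_subset (s₁ := {(k - 1, q - k), (k, q - k - 1)})]
    · rw [Finset.sum_pair (by simp; omega), hPn, hPl]; ring
    · intro x hx
      simp only [Finset.mem_insert, Finset.mem_singleton] at hx
      rw [Finset.HasAntidiagonal.mem_antidiagonal]
      rcases hx with rfl | rfl <;> simp <;> omega
    · rintro ⟨x, y⟩ hx hx'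
      simp only [Finset.mem_insert, Finset.mem_singleton, Prod.mk.injEq,
        Finset.HasAntidiagonal.mem_antidiagonal] at hx hx'
      dsimp only
      rcases Nat.lt_or_ge k x with h | h
      · rw [coeff_eq_zero_of_natDegree_lt (p := f) (by omega), zero_mul]
      · rw [coeff_eq_zero_of_natDegree_lt (p := P) (by omega), mul_zero]
  have h2 : f.coeff k = f.coeff (k - 1) * θ := by
    rw [sub_eq_zero] at h1; rw [h1]; field_simp
  refine ⟨fun j => f.eval (α j), ⟨f, ⟨f.coeff, ?_⟩, rfl⟩, ?_⟩
  · conv_lhs => rw [Polynomial.as_sum_range_C_mul_X_pow' f hfdeg]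
    obtain ⟨k, rfl⟩ : ∃ n, k = n + 1 := ⟨k - 1, by omega⟩
    rw [Finset.sum_range_succ, Finset.sum_range_succ, h2]
    simp only [Nat.add_sub_cancel, map_mul]
    ring
  · rw [← hT]
    refine Finset.card_le_card_of_injOn α ?_ hα.injective.injOn
    intro j hj
    by_contra h
    simp only [Finset.coe_filter, Finset.mem_univ, true_and, Set.mem_ofPred_eq] at hj
    exact hj (by rw [hfev _ h, hU])


/-! ### Lower bound for the covering radius -/

lemma distTo_le {F : Type*} [DecidableEq F] {n : ℕ} {u c : Fin n → F} {S : Set (Fin n → F)}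
    (hc : c ∈ S) : distTo u S ≤ hammingDist u c := Nat.sInf_le ⟨c, hc, rfl⟩

/-- The word `(α_j ^ k)_j` has distance at least `q - k`: `X ^ k - p` is nonzero of degree at most `k`
for every twisted polynomial `p`. -/
lemma le_covRad {F : Type*} [Field F] [DecidableEq F]
    (q : ℕ) (k : ℕ) (hk : 1 ≤ k)
    (θ : F) (α : Fin q → F) (hα : Function.Injective α) :
    q - k ≤ covRad (TRS α k θ) := by
  have h0 : (fun _ => 0 : Fin q → F) ∈ TRS α k θ := ⟨0, ⟨fun _ => 0, by simp⟩, by simp⟩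
  have hb : BddAbove {d | ∃ u, distTo u (TRS α k θ) = d} := by
    refine ⟨q, ?_⟩
    rintro d ⟨u, rfl⟩
    refine (distTo_le h0).trans ?_
    simpa using hammingDist_le_card_fintype (x := u) (y := fun _ => 0)
  refine le_trans ?_ (le_csSup hb ⟨fun j => α j ^ k, rfl⟩)
  refine le_csInf ⟨_, _, h0, rfl⟩ ?_
  rintro d ⟨c, ⟨p, ⟨f, rfl⟩, rfl⟩, rfl⟩
  set p : F[X] := (∑ i ∈ range (k - 1), C (f i) * X ^ i) +
    C (f (k - 1)) * (X ^ (k - 1) + C θ * X ^ k) with hp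
  have hlow : ∀ i, k - 1 ≤ i → (∑ i ∈ range (k - 1), C (f i) * X ^ i).coeff i = 0 := by
    intro i hi
    simp only [finsetSum_coeff, coeff_C_mul_X_pow]
    refine Finset.sum_eq_zero fun j hj => ?_
    rw [Finset.mem_range] at hj
    rw [if_neg (by omega)]
  -- a codeword polynomial never equals `X ^ k`: compare the coefficients at `k - 1` and `k`
  have hne : X ^ k - p ≠ 0 := by
    intro h
    have h1 := congrArg (fun s => coeff s (k - 1)) h
    have h2 := congrArg (fun s => coeff s k) h
    simp only [hp, coeff_sub, coeff_add, hlow _ le_rfl, hlow k (by omega), coeff_C_mul, coeff_X_pow,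
      coeff_zero, if_true] at h1 h2
    rw [if_neg (by omega)] at h1 h2
    simp at h1
    simp [h1] at h2
  have hdeg : (X ^ k - p).natDegree ≤ k := by
    refine (natDegree_sub_le _ _).trans (max_le (natDegree_X_pow_le k) ?_)
    refine natDegree_le_iff_coeff_eq_zero.mpr fun i hi => ?_
    simp only [hp, coeff_add, hlow i (by omega), coeff_C_mul, coeff_X_pow]
    rw [if_neg (by omega), if_neg (by omega)]; simp
  have hz : (univ.filter fun j => α j ^ k = p.eval (α j)).card ≤ k := by
    refine le_trans ?_ ((card_roots' _).trans hdeg)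
    refine le_trans ?_ (Multiset.toFinset_card_le _)
    refine Finset.card_le_card_of_injOn α ?_ hα.injOn
    intro j hj
    simp only [Finset.coe_filter, Finset.mem_univ, true_and, Set.mem_ofPred_eq] at hj
    simp [hne, hj]
  have := Finset.card_filter_add_card_filter_not (s := (univ : Finset (Fin q)))
    (fun j => α j ^ k = p.eval (α j))
  rw [Finset.card_univ, Fintype.card_fin] at this
  change _ ≤ (univ.filter fun j => α j ^ k ≠ p.eval (α j)).card
  simp only [ne_eq]
  omega

/-! ### Choosing the roots in characteristic two -/

/-- The functional `Q ↦ M (P * Q)`. -/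
noncomputable def twist {F : Type*} [Field F] (M : F[X] →ₗ[F] F) (P : F[X]) : F[X] →ₗ[F] F :=
  M ∘ₗ LinearMap.mulLeft F P

lemma twist_apply {F : Type*} [Field F] (M : F[X] →ₗ[F] F) (P Q : F[X]) :
    twist M P Q = M (P * Q) := rfl

lemma map_C_mul {F : Type*} [Field F] (M : F[X] →ₗ[F] F) (c : F) (Q : F[X]) :
    M (C c * Q) = c * M Q := by
  rw [← smul_eq_C_mul, map_smul, smul_eq_mul]

lemma twist_mul {F : Type*} [Field F] (M : F[X] →ₗ[F] F) (P Q : F[X]) :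
    twist M (P * Q) = twist (twist M P) Q := by
  ext; simp [twist_apply, mul_assoc]

/-- `M` does not vanish on the polynomials of degree at most `d`. -/
def NZ {F : Type*} [Field F] (M : F[X] →ₗ[F] F) (d : ℕ) : Prop := ∃ l ≤ d, M (X ^ l) ≠ 0

/-- The invariant of the greedy construction: `M` does not vanish on the polynomials of degree at most
`d`, or at least `M (X ^ (d+2) + σ X ^ (d+1)) ≠ 0`. Here `d` is the number of roots still to be chosen
and `σ` the sum prescribed for them and the last two roots together. For the syndrome functional,
with `d = r - 4` and `σ = θ⁻¹`, its negation says that `w_0 = ⋯ = w_{r-4} = 0` and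
`w_{r-2} = θ⁻¹ w_{r-3}`. -/
def NV {F : Type*} [Field F] (M : F[X] →ₗ[F] F) (σ : F) (d : ℕ) : Prop :=
  NZ M d ∨ M (X ^ (d + 2) + C σ * X ^ (d + 1)) ≠ 0

lemma NV.nz {F : Type*} [Field F] {M : F[X] →ₗ[F] F} {σ : F} {d : ℕ} (h : NV M σ d) :
    NZ M (d + 2) := by
  rcases h with ⟨l, hl, h⟩ | h
  · exact ⟨l, by omega, h⟩
  · by_contra h1
    simp only [NZ, not_exists, not_and, not_not] at h1
    exact h (by rw [map_add, map_C_mul, h1 _ le_rfl, h1 _ (by omega)]; simp)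

lemma exists_eval_ne {F : Type*} [Field F] [Fintype F] (p : F[X]) (hp : p ≠ 0)
    (h : p.natDegree < Fintype.card F) : ∃ x, p.eval x ≠ 0 := by
  by_contra! h1
  exact hp (eq_zero_of_natDegree_lt_card_of_eval_eq_zero' p univ (fun i _ => h1 i) (by simpa using h))

/-- All but at most one choice of a new root `x` preserve nonvanishing, in one degree less. -/
lemma NZ.step {F : Type*} [Field F] {M : F[X] →ₗ[F] F} {d : ℕ} (h : NZ M (d + 1)) :
    ∃ p : F[X], p ≠ 0 ∧ p.natDegree ≤ 1 ∧ ∀ x, p.eval x ≠ 0 → NZ (twist M (X + C x)) d := by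
  have : ∃ l ≤ d, M (X ^ (l + 1)) ≠ 0 ∨ M (X ^ l) ≠ 0 := by
    obtain ⟨l, hl, h⟩ := h
    rcases Nat.lt_or_ge d l with h1 | h1
    · exact ⟨d, le_rfl, Or.inl (by rwa [show d + 1 = l by omega])⟩
    · exact ⟨l, h1, Or.inr h⟩
  obtain ⟨l, hl, h⟩ := this
  refine ⟨C (M (X ^ (l + 1))) + C (M (X ^ l)) * X, ?_, by compute_degree, fun x hx => ⟨l, hl, ?_⟩⟩
  · intro h0
    have h1 := congrArg (fun s => coeff s 0) h0
    have h2 := congrArg (fun s => coeff s 1) h0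
    simp only [coeff_add, coeff_C_mul, coeff_C, coeff_X, coeff_zero] at h1 h2
    norm_num at h1 h2
    exact h.elim (· h1) (· h2)
  · rw [twist_apply, add_mul, map_add, map_C_mul, ← pow_succ']
    simp only [eval_add, eval_mul, eval_C, eval_X] at hx
    exact fun h => hx (by rw [← h]; ring)

/-- For all but at most three roots `x`, the functional twisted by `(X + x) ^ 3` stays nonvanishing, in
three degrees less. -/
lemma NZ.step_cube {F : Type*} [Field F] [CharP F 2] {M : F[X] →ₗ[F] F} {d : ℕ} (h : NZ M (d + 3)) :
    ∃ p : F[X], p ≠ 0 ∧ p.natDegree ≤ 3 ∧ ∀ x, p.eval x ≠ 0 → NZ (twist M ((X + C x) ^ 3)) d := by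
  have : ∃ l ≤ d, ∃ i ≤ 3, M (X ^ (l + i)) ≠ 0 := by
    obtain ⟨l, hl, h⟩ := h
    rcases Nat.lt_or_ge d l with h1 | h1
    · exact ⟨d, le_rfl, l - d, by omega, by rwa [show d + (l - d) = l by omega]⟩
    · exact ⟨l, h1, 0, by omega, h⟩
  obtain ⟨l, hl, i, hi, h⟩ := this
  refine ⟨C (M (X ^ (l + 3))) + C (M (X ^ (l + 2))) * X + C (M (X ^ (l + 1))) * X ^ 2
    + C (M (X ^ l)) * X ^ 3, ?_, by compute_degree, fun x hx => ⟨l, hl, ?_⟩⟩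
  · intro h0
    have h1 := congrArg (fun s => coeff s (3 - i)) h0
    simp only [coeff_add, coeff_C_mul, coeff_C, coeff_X, coeff_X_pow, coeff_zero] at h1
    interval_cases i <;> norm_num at h1 <;> exact h h1
  · -- in characteristic two `(X + x)³ = X³ + x X² + x² X + x³`
    have h3 : (X + C x) ^ 3 * X ^ l = X ^ (l + 3) + C x * X ^ (l + 2) + C (x ^ 2) * X ^ (l + 1)
        + C (x ^ 3) * X ^ l := by
      have h2 : (2 : F[X]) = 0 := CharTwo.two_eq_zero
      simp only [map_pow]
      linear_combination (X ^ l * (C x * X ^ 2 + C x ^ 2 * X)) * h2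
    rw [twist_apply, h3]
    simp only [map_add, map_C_mul]
    simp only [eval_add, eval_mul, eval_C, eval_X, eval_pow] at hx
    exact fun h => hx (by rw [← h]; ring)

/-- All but at most one choice of a new root `x` preserve the invariant, the prescribed sum becoming
`σ - x = σ + x`. -/
lemma NV.step {F : Type*} [Field F] [CharP F 2] {M : F[X] →ₗ[F] F} {σ : F} {d : ℕ} (h : NV M σ (d + 1)) :
    ∃ p : F[X], p ≠ 0 ∧ p.natDegree ≤ 1 ∧
      ∀ x, p.eval x ≠ 0 → NV (twist M (X + C x)) (σ + x) d := by
  by_cases h1 : NZ M (d + 1)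
  · obtain ⟨p, hp, hd, h⟩ := h1.step
    exact ⟨p, hp, hd, fun x hx => Or.inl (h x hx)⟩
  · have h2 := h.resolve_left h1
    simp only [NZ, not_exists, not_and, not_not] at h1
    refine ⟨1, one_ne_zero, by simp, fun x _ => Or.inr ?_⟩
    have h3 : (X + C x) * (X ^ (d + 2) + C (σ + x) * X ^ (d + 1)) =
        X ^ (d + 1 + 2) + C σ * X ^ (d + 1 + 1) + C (x * (σ + x)) * X ^ (d + 1) := by
      have h2 : (2 : F[X]) = 0 := CharTwo.two_eq_zero
      simp only [map_add, map_mul]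
      linear_combination (X ^ (d + 2) * C x) * h2
    rw [twist_apply, h3, map_add, map_C_mul, h1 _ le_rfl]
    simpa using h2

/-- Greedy choice of the first `n` roots. A new root must avoid those already chosen, the prescribed sum
`σ`, one value for the invariant, three values for its own condition and one value for the condition
of each earlier root: at most `2 n + 3` values in all. The result is used for `i = n`. -/
lemma exists_base {F : Type*} [Field F] [CharP F 2] [Fintype F] [DecidableEq F]
    (L : F[X] →ₗ[F] F) (τ : F) (hτ : τ ≠ 0) (n : ℕ)
    (hn : 2 * n + 3 < Fintype.card F) (hL : NV L τ n) :
    ∀ i ≤ n, ∃ A : Finset F, A.card = i ∧ τ + ∑ a ∈ A, a ≠ 0 ∧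
      NV (twist L (∏ a ∈ A, (X + C a))) (τ + ∑ a ∈ A, a) (n - i) ∧
      ∀ b ∈ A, NZ (twist L ((X + C b) ^ 2 * ∏ a ∈ A, (X + C a))) (n - i) := by
  intro i
  induction i with
  | zero =>
    intro _
    refine ⟨∅, rfl, by simpa using hτ, ?_, by simp⟩
    have : twist L 1 = L := by ext; simp [twist_apply]
    simpa [this] using hL
  | succ i ih =>
    intro hi
    obtain ⟨A, hA, hσ, hV, hZ⟩ := ih (by omega)
    set σ := τ + ∑ a ∈ A, a
    set G := ∏ a ∈ A, (X + C a)
    obtain ⟨d, hd, hd'⟩ : ∃ d, n - i = d + 1 ∧ n - (i + 1) = d := ⟨n - (i + 1), by omega, rfl⟩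
    rw [hd] at hV hZ
    rw [hd']
    obtain ⟨p₁, hp₁, hd₁, h₁⟩ := hV.step
    obtain ⟨p₃, hp₃, hd₃, h₃⟩ := NZ.step_cube (d := d) hV.nz
    choose! p hp hpd h₂ using fun b hb => (hZ b hb).step
    have hX : ∀ a : F, X + C a ≠ 0 := X_add_C_ne_zero
    obtain ⟨x, hx⟩ := exists_eval_ne (G * (X + C σ) * p₁ * p₃ * ∏ b ∈ A, p b) (by
        simp only [ne_eq, mul_eq_zero, not_or, Finset.prod_eq_zero_iff, not_exists, not_and, G]
        exact ⟨⟨⟨⟨fun a _ => hX a, hX σ⟩, hp₁⟩, hp₃⟩, hp⟩) (by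
        have e1 : G.natDegree ≤ i := by
          refine (natDegree_prod_le _ _).trans ?_
          simp [hA]
        have e2 : (∏ b ∈ A, p b).natDegree ≤ i := by
          refine (natDegree_prod_le _ _).trans ((Finset.sum_le_card_nsmul _ _ 1 hpd).trans ?_)
          simp [hA]
        have e3 : (X + C σ).natDegree = 1 := natDegree_X_add_C σ
        have f1 := natDegree_mul_le (p := G * (X + C σ) * p₁ * p₃) (q := ∏ b ∈ A, p b)
        have f2 := natDegree_mul_le (p := G * (X + C σ) * p₁) (q := p₃)
        have f3 := natDegree_mul_le (p := G * (X + C σ)) (q := p₁)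
        have f4 := natDegree_mul_le (p := G) (q := (X + C σ))
        omega)
    simp only [eval_mul, eval_prod, ne_eq, mul_eq_zero, not_or, Finset.prod_eq_zero_iff,
      not_exists, not_and, eval_add, eval_X, eval_C, G] at hx
    obtain ⟨⟨⟨⟨x1, x2⟩, x3⟩, x4⟩, x5⟩ := hx
    have hxA : x ∉ A := fun h => x1 x h (CharTwo.add_self_eq_zero x)
    refine ⟨insert x A, by rw [card_insert_of_notMem hxA, hA], ?_, ?_, ?_⟩
    · rw [sum_insert hxA]
      intro h
      exact x2 (by rw [← h]; ring)
    · rw [sum_insert hxA, prod_insert hxA, mul_comm, twist_mul,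
        show τ + (x + ∑ a ∈ A, a) = σ + x by ring]
      exact h₁ x x3
    · intro b hb
      rw [prod_insert hxA]
      rcases Finset.mem_insert.mp hb with rfl | hb
      · rw [show (X + C b) ^ 2 * ((X + C b) * ∏ a ∈ A, (X + C a)) = G * (X + C b) ^ 3 by ring,
          twist_mul]
        exact h₃ b x4
      · rw [show (X + C b) ^ 2 * ((X + C x) * ∏ a ∈ A, (X + C a)) =
          ((X + C b) ^ 2 * G) * (X + C x) by ring, twist_mul]
        exact h₂ b hb x (x5 b hb)

/-- Choice of the last three roots. With simple roots `x` and `x + σ` and double root `z`, the product is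
killed by `L` iff `z ^ 2` equals a certain quotient depending on `x`, and squaring is surjective in
characteristic two. The values of `x` for which the denominator vanishes, or for which `z` or one of
the simple roots collides with another root, are roots of a nonzero polynomial of degree at most
`4 |A| + 10`. -/
lemma exists_tail {F : Type*} [Field F] [CharP F 2] [Fintype F] [DecidableEq F]
    (L : F[X] →ₗ[F] F) (σ : F) (hσ : σ ≠ 0)
    (A : Finset F) (hn : 4 * A.card + 10 < Fintype.card F)
    (hV : NV (twist L (∏ a ∈ A, (X + C a))) σ 0)
    (hZ : ∀ b ∈ A, NZ (twist L ((X + C b) ^ 2 * ∏ a ∈ A, (X + C a))) 0) :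
    ∃ x z, x ∉ A ∧ x + σ ∉ A ∧ z ∉ A ∧ z ≠ x ∧ z ≠ x + σ ∧
      L ((X + C z) ^ 2 * ((X + C x) * (X + C (x + σ)) * ∏ a ∈ A, (X + C a))) = 0 := by
  set G := ∏ a ∈ A, (X + C a)
  set b0 := L G
  set b1 := L (G * (X ^ 2 + C σ * X))
  set α0 := L (X ^ 2 * (G * (X ^ 2 + C σ * X)))
  set α1 := L (X ^ 2 * G)
  have h2 : (2 : F) = 0 := CharTwo.two_eq_zero
  have h2' : (2 : F[X]) = 0 := CharTwo.two_eq_zero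
  have hb : b0 ≠ 0 ∨ b1 ≠ 0 := by
    rcases hV with ⟨l, hl, h⟩ | h
    · left
      obtain rfl : l = 0 := by omega
      simpa [twist_apply] using h
    · right
      simpa [twist_apply] using h
  have hQ : ∀ x, (X + C x) * (X + C (x + σ)) * G =
      G * (X ^ 2 + C σ * X) + C (x * (x + σ)) * G := by
    intro x
    simp only [map_add, map_mul]
    linear_combination (G * C x * X) * h2'
  have hL0 : ∀ x, L ((X + C x) * (X + C (x + σ)) * G) = b1 + x * (x + σ) * b0 := by
    intro x
    rw [hQ, map_add, map_C_mul]
  have hsq : ∀ z Q, L ((X + C z) ^ 2 * Q) = L (X ^ 2 * Q) + z ^ 2 * L Q := by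
    intro z Q
    rw [← map_C_mul, ← map_add]
    congr 1
    simp only [map_pow]
    linear_combination (X * C z * Q) * h2'
  have hLz : ∀ x z, L ((X + C z) ^ 2 * ((X + C x) * (X + C (x + σ)) * G)) =
      α0 + x * (x + σ) * α1 + z ^ 2 * (b1 + x * (x + σ) * b0) := by
    intro x z
    rw [hsq, hL0, hQ, mul_add, map_add, mul_left_comm (X ^ 2) (C _) G, map_C_mul]
  have hc : ∀ a ∈ A, α1 + a ^ 2 * b0 ≠ 0 := by
    intro a ha
    obtain ⟨l, hl, h⟩ := hZ a ha
    obtain rfl : l = 0 := by omega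
    simpa [twist_apply, hsq] using h
  -- As polynomials in `x`: `pb` is the denominator of `z ^ 2`, `pa a` detects `z = a`,
  -- `h₁` detects `z = x` and `h₂` detects `z = x + σ`.
  let T : F[X] := X ^ 2 + C σ * X
  have hT : ∀ x, T.eval x = x * (x + σ) := fun x => by simp [T]; ring
  let pb : F[X] := C b1 + C b0 * T
  let pa : F → F[X] := fun a => C (α0 + a ^ 2 * b1) + C (α1 + a ^ 2 * b0) * T
  let h₁ : F[X] := C α0 + C α1 * T + X ^ 2 * pb
  let h₂ : F[X] := C α0 + C α1 * T + (X + C σ) ^ 2 * pb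
  have npb : pb ≠ 0 := by
    intro h
    have c0 := congrArg (fun s => coeff s 0) h
    have c2 := congrArg (fun s => coeff s 2) h
    simp [pb, T, coeff_C, coeff_X] at c0 c2
    exact hb.elim (· c2) (· c0)
  have npa : ∀ a ∈ A, pa a ≠ 0 := by
    intro a ha h
    have c2 := congrArg (fun s => coeff s 2) h
    simp only [pa, T, coeff_add, coeff_C_mul, coeff_X_pow, coeff_C, coeff_X] at c2
    exact hc a ha (by simpa using c2)
  have e₁ : h₁ = C b0 * X ^ 4 + C (σ * b0) * X ^ 3 + C (α1 + b1) * X ^ 2 + C (σ * α1) * X + C α0 := by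
    simp only [h₁, pb, T, map_add, map_mul]; ring
  have nh₁ : h₁ ≠ 0 := by
    intro h
    rw [e₁] at h
    have c1 := congrArg (fun s => coeff s 1) h
    have c2 := congrArg (fun s => coeff s 2) h
    have c4 := congrArg (fun s => coeff s 4) h
    simp only [coeff_add, coeff_C_mul, coeff_X_pow, coeff_C, coeff_X, coeff_zero] at c1 c2 c4
    norm_num at c1 c2 c4
    have := c1.resolve_left hσ
    rw [this, zero_add] at c2
    exact hb.elim (· c4) (· c2)
  -- `x ↦ x + σ` interchanges the two simple roots, hence `h₁` and `h₂`
  have e₂ : h₂ = h₁.comp (X + C σ) := by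
    have : T.comp (X + C σ) = T := by
      simp only [T, add_comp, mul_comp, pow_comp, X_comp, C_comp]
      linear_combination (C σ * X + C σ ^ 2) * h2'
    simp only [h₂, h₁, pb, add_comp, mul_comp, pow_comp, X_comp, C_comp, this]
  have nh₂ : h₂ ≠ 0 := by
    rw [e₂]
    exact fun h => nh₁ ((comp_eq_zero_iff.mp h).resolve_right (fun h' => by
      have := congrArg natDegree h'.2
      simp at this))
  have d₁ : h₁.natDegree ≤ 4 := by rw [e₁]; compute_degree
  have d₂ : h₂.natDegree ≤ 4 := by
    rw [e₂, natDegree_comp, natDegree_X_add_C]; omega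
  have db : pb.natDegree ≤ 2 := by simp only [pb, T]; compute_degree
  have da : ∀ a ∈ A, (pa a).natDegree ≤ 2 := by
    intro a _; simp only [pa, T]; compute_degree
  have hX : ∀ a : F, X + C a ≠ 0 := X_add_C_ne_zero
  obtain ⟨x, hx⟩ := exists_eval_ne
    ((∏ a ∈ A, (X + C a)) * (∏ a ∈ A, (X + C (σ + a))) * pb * (∏ a ∈ A, pa a) * h₁ * h₂) (by
      simp only [ne_eq, mul_eq_zero, not_or, Finset.prod_eq_zero_iff, not_exists, not_and]
      exact ⟨⟨⟨⟨⟨fun a _ => hX a, fun a _ => hX _⟩, npb⟩, npa⟩, nh₁⟩, nh₂⟩) (by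
      have g1 : (∏ a ∈ A, (X + C a)).natDegree ≤ A.card := by
        refine (natDegree_prod_le _ _).trans ?_
        simp
      have g2 : (∏ a ∈ A, (X + C (σ + a))).natDegree ≤ A.card := by
        refine (natDegree_prod_le _ _).trans ?_
        simp only [natDegree_X_add_C]
        simp
      have g3 : (∏ a ∈ A, pa a).natDegree ≤ A.card * 2 :=
        (natDegree_prod_le _ _).trans (Finset.sum_le_card_nsmul _ _ 2 da)
      refine lt_of_le_of_lt (natDegree_mul_le_of_le (natDegree_mul_le_of_le
        (natDegree_mul_le_of_le (natDegree_mul_le_of_le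
        (natDegree_mul_le_of_le g1 g2) db) g3) d₁) d₂) ?_
      omega)
  simp only [eval_mul, eval_prod, ne_eq, mul_eq_zero, not_or, Finset.prod_eq_zero_iff,
      not_exists, not_and, eval_add, eval_X, eval_C, eval_pow, hT, pb, pa, h₁, h₂] at hx
  obtain ⟨⟨⟨⟨⟨x1, x2⟩, x3⟩, x4⟩, x5⟩, x6⟩ := hx
  have hsurj : IsSquare ((α0 + x * (x + σ) * α1) / (b1 + b0 * (x * (x + σ)))) :=
    FiniteField.isSquare_of_char_two (ringChar.eq F 2) _
  obtain ⟨z, hz⟩ := hsurj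
  have hz' : α0 + x * (x + σ) * α1 + z ^ 2 * (b1 + x * (x + σ) * b0) = 0 := by
    rw [div_eq_iff x3] at hz
    rw [hz]
    linear_combination (z ^ 2 * (b1 + x * (x + σ) * b0)) * h2
  refine ⟨x, z, fun h => x1 x h (CharTwo.add_self_eq_zero x), fun h => x2 _ h ?_, fun h => x4 z h ?_,
    ?_, ?_, ?_⟩
  · linear_combination (x + σ) * h2
  · linear_combination hz'
  · rintro rfl
    exact x5 (by linear_combination hz')
  · rintro rfl
    exact x6 (by linear_combination hz')
  · rw [hLz, hz']

/-! ### Deep holes -/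

/-- Let `q = 2^m ≥ 8`, `3q - 4 ≤ 4k`, `k ≤ q - 4`, `r = q - k`. If
`u ∈ 𝔽_q^q` is a deep hole of `TRS_k(𝔽_q, θ)` with syndrome `w = H·uᵀ`, then either
(a) `w_0 = ⋯ = w_{r-2} = 0` and `w_{r-1} ≠ 0`, or
(b) `w_0 = ⋯ = w_{r-4} = 0`, `w_{r-3} ≠ 0` and `w_{r-2} = θ⁻¹ w_{r-3}`. -/
theorem deep_hole_syndrome_char_two {F : Type*} [Field F] [Fintype F] [DecidableEq F]
    (q m : ℕ) (hq : q = Fintype.card F) (hqm : q = 2 ^ m) (hq8 : 8 ≤ q)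
    (k : ℕ) (hk3 : 3 * q - 4 ≤ 4 * k) (hk4 : k ≤ q - 4)
    (θ : F) (hθ : θ ≠ 0) (α : Fin q → F) (hα : Function.Bijective α) (u : Fin q → F)
    (hu : IsDeepHole (TRS α k θ) u) (w : Fin (q - k) → F)
    (hw : (Hmat (q - k) θ α).mulVec u = w) :
    ((∀ i : Fin (q - k), (i : ℕ) < q - k - 1 → w i = 0) ∧ w ⟨q - k - 1, by omega⟩ ≠ 0) ∨
      ((∀ i : Fin (q - k), (i : ℕ) < q - k - 3 → w i = 0) ∧ w ⟨q - k - 3, by omega⟩ ≠ 0 ∧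
        w ⟨q - k - 2, by omega⟩ = θ⁻¹ * w ⟨q - k - 3, by omega⟩) := by
  classical
  obtain ⟨p, hp, n, hpp, hcard⟩ := FiniteField.card' F
  have hp2 : p = 2 := by
    have h : p ∣ 2 ^ m := by
      rw [← hqm, hq, hcard]
      exact dvd_pow_self p n.ne_zero
    exact (Nat.prime_dvd_prime_iff_eq hpp Nat.prime_two).mp (hpp.dvd_of_dvd_pow h)
  subst hp2
  obtain ⟨r, hr, hr4⟩ : ∃ r, q - k = r + 4 ∧ 4 * r + 12 ≤ q := ⟨q - k - 4, by omega, by omega⟩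
  let L : F[X] →ₗ[F] F := ∑ j, u j • leval (α j)
  have hL : ∀ P, L P = ∑ j, u j * P.eval (α j) := by
    intro P
    simp [L, leval_apply]
  have hwi : ∀ i (hi : i < q - k), w ⟨i, hi⟩ = if i = q - k - 1 then
      L (X ^ (q - k - 1)) - θ * L (X ^ (q - k)) else L (X ^ i) := by
    intro i hi
    rw [← hw]
    simp only [Matrix.mulVec, dotProduct, Hmat, Matrix.of_apply, crv, hL, eval_pow, eval_X]
    split_ifs with h
    · rw [Finset.mul_sum, ← Finset.sum_sub_distrib]
      exact Finset.sum_congr rfl fun j _ => by ring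
    · exact Finset.sum_congr rfl fun j _ => by ring
  have hwlow : ∀ i (hi : i < q - k), i < q - k - 1 → w ⟨i, hi⟩ = L (X ^ i) := by
    intro i hi h
    rw [hwi, if_neg (by omega)]
  -- a deep hole has distance at least `q - k`, so by `exists_codeword` `L` kills none of these
  have hfar : ∀ (T : Finset F) (z : F), T.card = q - k - 1 → z + ∑ a ∈ T, a = θ⁻¹ →
      L ((X + C z) * ∏ a ∈ T, (X + C a)) ≠ 0 := by
    intro T z hT hz h0
    simp only [← CharTwo.sub_eq_add] at h0
    rw [hL] at h0
    obtain ⟨c, hc, hd⟩ := exists_codeword q hq hq8 k (by omega) (by omega) θ hθ α hα u T hT z hz h0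
    have h1 := distTo_le (u := u) hc
    have h2 := le_covRad q k (by omega) θ α hα.injective
    rw [← hu] at h2
    omega
  by_cases hV : NV L θ⁻¹ r
  · exfalso
    obtain ⟨A, hA, hσ, hV', hZ⟩ := exists_base L θ⁻¹ (inv_ne_zero hθ) r (by omega) hV r le_rfl
    rw [Nat.sub_self] at hV' hZ
    set σ := θ⁻¹ + ∑ a ∈ A, a with hσd
    obtain ⟨x, z, hx, hy, hz, hzx, hzy, h0⟩ := exists_tail L σ hσ A (by omega) hV' hZ
    have hxy : x ≠ x + σ := by simpa using hσ
    have n1 : x + σ ∉ A := hy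
    have n2 : x ∉ insert (x + σ) A := by simp [hx, hxy]
    have n3 : z ∉ insert x (insert (x + σ) A) := by simp [hz, hzx, hzy]
    -- of the two factors `X + z`, one belongs to the product over `T` and one is the extra factor
    refine hfar (insert z (insert x (insert (x + σ) A))) z ?_ ?_ ?_
    · rw [card_insert_of_notMem n3, card_insert_of_notMem n2, card_insert_of_notMem n1]
      omega
    · rw [sum_insert n3, sum_insert n2, sum_insert n1, hσd]
      have h2 : (2 : F) = 0 := CharTwo.two_eq_zero
      linear_combination (z + x + ∑ a ∈ A, a) * h2
    · rw [prod_insert n3, prod_insert n2, prod_insert n1, ← h0]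
      congr 1
      ring
  · simp only [NV, NZ, not_or, not_exists, not_and, not_not] at hV
    obtain ⟨hlow, hrel⟩ := hV
    rw [map_add, map_C_mul] at hrel
    rw [hwlow (q - k - 3) _ (by omega), hwlow (q - k - 2) _ (by omega),
      show q - k - 3 = r + 1 by omega, show q - k - 2 = r + 2 by omega]
    have hrel' : L (X ^ (r + 2)) = θ⁻¹ * L (X ^ (r + 1)) := by
      rwa [← CharTwo.sub_eq_add, sub_eq_zero] at hrel
    by_cases h1 : L (X ^ (r + 1)) = 0
    · left
      rw [h1, mul_zero] at hrel'
      have hz : ∀ i, i < q - k - 1 → L (X ^ i) = 0 := by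
        intro i hi
        rcases (by omega : i ≤ r ∨ i = r + 1 ∨ i = r + 2) with h | rfl | rfl
        exacts [hlow i h, h1, hrel']
      refine ⟨fun i hi => by rw [hwlow i i.2 hi, hz _ hi], fun hlast => ?_⟩
      rw [hwi, if_pos rfl] at hlast
      -- the syndrome vanishes, so `L` kills the polynomial of `hfar` for any `T`
      obtain ⟨T, -, hT⟩ := Finset.exists_subset_card_eq (s := (univ : Finset F)) (n := q - k - 1)
        (by rw [Finset.card_univ, ← hq]; omega)
      refine hfar T (θ⁻¹ - ∑ a ∈ T, a) hT (sub_add_cancel _ _) ?_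
      obtain ⟨hPd, hPl, hPn⟩ := locator_coeffs T (θ⁻¹ - ∑ a ∈ T, a)
      rw [sub_add_cancel, hT] at hPn
      rw [hT] at hPd hPl
      simp only [CharTwo.sub_eq_add] at hPd hPl hPn
      simp only [CharTwo.sub_eq_add]
      set P := (X + C (θ⁻¹ + ∑ a ∈ T, a)) * ∏ a ∈ T, (X + C a)
      rw [Polynomial.as_sum_range_C_mul_X_pow' P (Nat.lt_succ_of_le hPd.le), map_sum]
      simp only [map_C_mul]
      rw [Finset.sum_range_succ, Finset.sum_range_succ, hPl, hPn,
        show q - k - 1 + 1 = q - k by omega,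
        Finset.sum_eq_zero (fun i hi => by rw [hz i (Finset.mem_range.mp hi), mul_zero])]
      rw [sub_eq_zero] at hlast
      rw [hlast]
      field_simp
      ring
    · right
      refine ⟨fun i hi => by rw [hwlow i i.2 (by omega), hlow _ (by omega)], h1, hrel'⟩
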